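/- The first sign change of d₂(x) = π₂(x) − C₂·Li₂(x) occurs at the twin prime pair (1369391, 1369393): the numbers 1369391 and 1369393 are both prime, π₂(x) < C₂·Li₂(x) for every real x with 2 < x < 1369393, and π₂(1369393) > C₂·Li₂(1369393). -/

import Mathlib

/-!
Every twin prime pair other than `(3, 5)` is `(6 * k - 1, 6 * k + 1)` for some `k`, so `piTwin` is a
step function determined by a count of such indices `k`. Since `Li2` is increasing and `C2` is
positive, `piTwin x < C2 * Li2 x` holds for all `x` between two points as soon as the value of
`piTwin` near the right one is below the value of `C2 * Li2` at the left one; a chain of fewer than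
`2100` points leads from `2` to `1369393`. The numbers of twin indices in between are found by
testing coprimality of `36 * k ^ 2 - 1` to a factorial.

At `1369393` the excess of `piTwin` is so small that all constants are needed to about six digits.
As `1 / log t ^ 2` is convex, the midpoint and trapezoid rules bound `Li2` from below and above; the
logarithms are propagated along the grid by the series of `artanh`, in fixed point arithmetic. The
partial products of `C2` decrease to it, and their tails are compared with the telescoping product
of `1 - 1 / (n - 1) ^ 2` over all integers `n`.
-/

open Real Filter Set

/-- `Li₂(x) = ∫₂ˣ dt/(log t)²`. -/
noncomputable def Li2 (x : ℝ) : ℝ := ∫ t in (2:ℝ)..x, 1 / (Real.log t) ^ 2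

/-- `π₂(x)`: the number of primes `p` with `p+2` also prime and `p+2 ≤ x`. -/
noncomputable def piTwin (x : ℝ) : ℕ :=
  Nat.card {p : ℕ | p.Prime ∧ (p + 2).Prime ∧ ((p : ℝ) + 2) ≤ x}

/-- The twin prime constant `C₂ = 2·∏_{p prime, p>2} (1 − 1/(p−1)²)`. -/
noncomputable def C2 : ℝ :=
  2 * ∏' p : {p : ℕ // p.Prime ∧ 2 < p}, (1 - 1 / (((p : ℕ) : ℝ) - 1) ^ 2)

/-- `d₂(x) = π₂(x) − C₂·Li₂(x)`. -/
noncomputable def d2 (x : ℝ) : ℝ := (piTwin x : ℝ) - C2 * Li2 x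

open scoped Nat Topology

/-! ### The twin prime constant -/

/-- The factor of the product defining `C2 / 2` at `n`, extended by `1` to all natural numbers. -/
noncomputable def twinFactor (n : ℕ) : ℝ :=
  if n.Prime ∧ 2 < n then 1 - 1 / ((n : ℝ) - 1) ^ 2 else 1

/-- The partial product over `n < N` of the product defining `C2 / 2`. -/
noncomputable def twinProduct (N : ℕ) : ℝ := ∏ n ∈ Finset.range N, twinFactor n

theorem summable_twinFactor_sub_one : Summable fun n ↦ twinFactor n - 1 := by
  refine ((Real.summable_one_div_nat_pow.2 one_lt_two).mul_left 4).of_norm_bounded fun n ↦ ?_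
  unfold twinFactor
  split_ifs with hn
  · have hn' : (2 : ℝ) < n := by exact_mod_cast hn.2
    have hpos : 0 < (n : ℝ) - 1 := by linarith
    rw [sub_sub_cancel_left, norm_neg, Real.norm_of_nonneg (by positivity), mul_one_div,
      div_le_div_iff₀ (by positivity) (by positivity)]
    nlinarith
  · rw [sub_self, norm_zero]
    positivity

theorem tendsto_twinProduct : Tendsto twinProduct atTop (𝓝 (C2 / 2)) := by
  have hC2 : C2 / 2 = ∏' n, twinFactor n := by
    rw [C2, mul_div_cancel_left₀ _ two_ne_zero]
    refine (tprod_subtype {p : ℕ | p.Prime ∧ 2 < p} fun n : ℕ ↦ 1 - 1 / ((n : ℝ) - 1) ^ 2).trans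
      (tprod_congr fun n ↦ ?_)
    rw [mulIndicator_apply, twinFactor]
    rfl
  have hmul : Multipliable twinFactor := by
    simpa only [add_sub_cancel] using
      Real.multipliable_one_add_of_summable summable_twinFactor_sub_one
  exact hC2 ▸ hmul.hasProd.tendsto_prod_nat

theorem le_twinFactor (n : ℕ) : 1 - 1 / ((n : ℝ) - 1) ^ 2 ≤ twinFactor n := by
  unfold twinFactor
  split_ifs
  · exact le_rfl
  · exact sub_le_self _ (by positivity)

theorem twinFactor_nonneg (n : ℕ) : 0 ≤ twinFactor n := by
  unfold twinFactor
  split_ifs with hn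
  · have hn' : (2 : ℝ) < n := by exact_mod_cast hn.2
    exact sub_nonneg.2 (div_le_one_of_le₀ (one_le_pow₀ (by linarith)) (by positivity))
  · exact zero_le_one

theorem twinFactor_le_one (n : ℕ) : twinFactor n ≤ 1 := by
  unfold twinFactor
  split_ifs
  · exact sub_le_self _ (by positivity)
  · exact le_rfl

theorem twinProduct_nonneg (N : ℕ) : 0 ≤ twinProduct N :=
  Finset.prod_nonneg fun n _ ↦ twinFactor_nonneg n

theorem twinProduct_succ (N : ℕ) : twinProduct (N + 1) = twinProduct N * twinFactor N :=
  Finset.prod_range_succ _ _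

theorem antitone_twinProduct : Antitone twinProduct :=
  antitone_nat_of_succ_le fun N ↦ by
    rw [twinProduct_succ]
    exact mul_le_of_le_one_right (twinProduct_nonneg N) (twinFactor_le_one N)

/-- The tail bound rests on `1 - 1 / (n - 1) ^ 2 = ((n - 2) / (n - 1)) / ((n - 1) / n)`, which makes
the product over all integers telescope. -/
theorem twinProduct_mul_le_twinProduct_mul {N M : ℕ} (hN : 3 ≤ N) (hNM : N ≤ M) :
    twinProduct N * ((N - 2) / (N - 1)) ≤ twinProduct M * ((M - 2) / (M - 1)) := by
  induction M, hNM using Nat.le_induction with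
  | base => exact le_rfl
  | succ M hNM ih =>
    have hM : (3 : ℝ) ≤ M := by exact_mod_cast hN.trans hNM
    have hM₀ : (M : ℝ) ≠ 0 := by linarith
    have hM₁ : (M : ℝ) - 1 ≠ 0 := by linarith
    have telescope : ((M : ℝ) - 2) / (M - 1) = (1 - 1 / ((M : ℝ) - 1) ^ 2) * ((M - 1) / M) := by
      field_simp
      ring
    have hratio : (0 : ℝ) ≤ (M - 1) / M := div_nonneg (by linarith) (by linarith)
    calc twinProduct N * ((N - 2) / (N - 1))
        ≤ twinProduct M * ((M - 2) / (M - 1)) := ih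
      _ ≤ twinProduct M * (twinFactor M * ((M - 1) / M)) := by
          rw [telescope]
          gcongr
          · exact twinProduct_nonneg M
          · exact le_twinFactor M
      _ = twinProduct (M + 1) * (((M + 1 : ℕ) - 2) / ((M + 1 : ℕ) - 1)) := by
          rw [twinProduct_succ]
          push_cast
          ring

theorem C2_le_two_mul_twinProduct (N : ℕ) : C2 ≤ 2 * twinProduct N := by
  linarith [antitone_twinProduct.le_of_tendsto tendsto_twinProduct N]

theorem two_mul_twinProduct_mul_le_C2 {N : ℕ} (hN : 3 ≤ N) :
    2 * (twinProduct N * ((N - 2) / (N - 1))) ≤ C2 := by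
  suffices twinProduct N * ((N - 2) / (N - 1)) ≤ C2 / 2 by linarith
  refine ge_of_tendsto tendsto_twinProduct (eventually_atTop.2 ⟨N, fun M hNM ↦ ?_⟩)
  refine (twinProduct_mul_le_twinProduct_mul hN hNM).trans
    (mul_le_of_le_one_right (twinProduct_nonneg M) ?_)
  have hM : (3 : ℝ) ≤ M := by exact_mod_cast hN.trans hNM
  exact div_le_one_of_le₀ (by linarith) (by linarith)

theorem prime_iff_coprime_factorial {B n : ℕ} (hBn : B < n) (hn : n < (B + 1) ^ 2) :
    n.Prime ↔ n.Coprime B ! := by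
  refine ⟨fun hp ↦ hp.coprime_factorial_of_lt hBn, fun hcop ↦ by_contra fun hp ↦ ?_⟩
  have hn₁ : n ≠ 1 := by
    rintro rfl
    obtain rfl : B = 0 := by lia
    norm_num at hn
  have hlt : B < n.minFac := (Nat.coprime_factorial_iff hn₁).1 hcop
  have hsq : n.minFac ^ 2 ≤ n := Nat.minFac_sq_le_self (by lia) hp
  exact absurd (hn.trans_le (Nat.pow_le_pow_left hlt 2)) hsq.not_gt

/-- The indicator of coprimality: `1 / g` in `ℕ` is `1` if `g = 1` and `0` otherwise. As in the
other functions evaluated below, unfolded operations such as `Nat.div` stand in for notation where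
they are met often, because the kernel evaluates them directly. -/
def coprimeIndicator (F n : ℕ) : ℕ := Nat.div 1 (Nat.gcd (Nat.mod F n) n)

theorem coprimeIndicator_eq (F n : ℕ) :
    coprimeIndicator F n = if n.Coprime F then 1 else 0 := by
  change 1 / Nat.gcd (F % n) n = _
  rw [← Nat.gcd_rec]
  split_ifs with h
  · rw [h.gcd_eq_one]
  · rw [Nat.coprime_iff_gcd_eq_one] at h
    rcases Nat.eq_zero_or_pos (n.gcd F) with h0 | hpos
    · rw [h0]
    · exact Nat.div_eq_of_lt (by lia)

/-- The product of `f` over the `2 ^ d` integers from `a` on, by repeated halving. -/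
def dyadicProd (f : ℕ → ℕ) (d : ℕ) : ℕ → ℕ :=
  Nat.rec f (fun d ih a ↦ Nat.mul (ih a) (ih (Nat.add a (Nat.pow 2 d)))) d

theorem dyadicProd_eq_prod_Ico (f : ℕ → ℕ) (d a : ℕ) :
    dyadicProd f d a = ∏ n ∈ Finset.Ico a (a + 2 ^ d), f n := by
  induction d generalizing a with
  | zero => simp [dyadicProd]
  | succ d ih =>
    calc dyadicProd f (d + 1) a = dyadicProd f d a * dyadicProd f d (a + 2 ^ d) := rfl
      _ = ∏ n ∈ Finset.Ico a (a + 2 ^ (d + 1)), f n := by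
        rw [ih, ih, Finset.prod_Ico_consecutive _ (by lia) (by lia), pow_succ, mul_two, add_assoc]

/-- The numerator of `twinFactor n`, if coprimality to `F` detects whether `n` is prime. -/
def twinNum (F n : ℕ) : ℕ := Nat.pow (Nat.mul n (Nat.sub n 2)) (coprimeIndicator F n)

/-- The denominator of `twinFactor n`, if coprimality to `F` detects whether `n` is prime. -/
def twinDen (F n : ℕ) : ℕ := Nat.pow (Nat.pow (Nat.sub n 1) 2) (coprimeIndicator F n)

theorem twinFactor_eq_div {F n : ℕ} (hn : 2 < n) (hF : n.Prime ↔ n.Coprime F) :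
    twinFactor n = twinNum F n / twinDen F n := by
  change _ = (((n * (n - 2)) ^ coprimeIndicator F n : ℕ) : ℝ) /
    (((n - 1) ^ 2) ^ coprimeIndicator F n : ℕ)
  rw [twinFactor, coprimeIndicator_eq]
  simp only [hn, and_true, hF]
  split_ifs
  · have hn' : (2 : ℝ) < n := by exact_mod_cast hn
    have hn₁ : (n : ℝ) - 1 ≠ 0 := by linarith
    rw [pow_one, pow_one]
    push_cast [Nat.cast_sub hn.le, Nat.cast_sub (one_lt_two.trans hn).le]
    field_simp
    ring
  · simp only [pow_zero, Nat.cast_one, div_one]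

theorem prod_Ico_twinFactor {B a : ℕ} (d : ℕ) (hB : 2 ≤ B) (hBa : B < a)
    (ha : a + 2 ^ d ≤ (B + 1) ^ 2) :
    ∏ n ∈ Finset.Ico a (a + 2 ^ d), twinFactor n =
      dyadicProd (twinNum B !) d a / dyadicProd (twinDen B !) d a := by
  rw [dyadicProd_eq_prod_Ico, dyadicProd_eq_prod_Ico, Nat.cast_prod, Nat.cast_prod,
    ← Finset.prod_div_distrib]
  refine Finset.prod_congr rfl fun n hn ↦ ?_
  obtain ⟨han, hna⟩ := Finset.mem_Ico.1 hn
  exact twinFactor_eq_div (by lia)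
    (prime_iff_coprime_factorial (by lia) (by lia))

/-- The product of `f B ! n` over `3 ≤ n < 1063 + 2 ^ 17`, in four ranges with bounds `B` such that
`B < n < (B + 1) ^ 2`. -/
def sievedProd (f : ℕ → ℕ → ℕ) : ℕ :=
  dyadicProd (f 2 !) 2 3 * dyadicProd (f 6 !) 5 7 * dyadicProd (f 38 !) 10 39 *
    dyadicProd (f 363 !) 17 1063

theorem twinProduct_eq_div :
    twinProduct (1063 + 2 ^ 17) = sievedProd twinNum / sievedProd twinDen := by
  have h₃ : ∏ n ∈ Finset.range 3, twinFactor n = 1 := by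
    simp [twinFactor, Finset.prod_range_succ]
  rw [twinProduct, ← Finset.prod_range_mul_prod_Ico _ (by norm_num : 3 ≤ 1063 + 2 ^ 17), h₃,
    one_mul, ← Finset.prod_Ico_consecutive _ (by norm_num : 3 ≤ 1063) (by norm_num),
    ← Finset.prod_Ico_consecutive _ (by norm_num : 3 ≤ 39) (by norm_num),
    ← Finset.prod_Ico_consecutive _ (by norm_num : 3 ≤ 7) (by norm_num), sievedProd, sievedProd]
  have block₁ := prod_Ico_twinFactor (B := 2) (a := 3) 2 le_rfl (by norm_num) (by norm_num)
  have block₂ := prod_Ico_twinFactor (B := 6) (a := 7) 5 (by norm_num) (by norm_num) (by norm_num)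
  have block₃ :=
    prod_Ico_twinFactor (B := 38) (a := 39) 10 (by norm_num) (by norm_num) (by norm_num)
  have block₄ :=
    prod_Ico_twinFactor (B := 363) (a := 1063) 17 (by norm_num) (by norm_num) (by norm_num)
  simp only [Nat.cast_mul, mul_div_mul_comm]
  rw [← block₁, ← block₂, ← block₃, ← block₄]
  simp only [Nat.reducePow, Nat.reduceAdd]

theorem sievedProd_certificate :
    0 < sievedProd twinDen ∧
    2 * 10 ^ 6 * sievedProd twinNum ≤ 1320325 * sievedProd twinDen ∧
      1320314 * (132134 * sievedProd twinDen) ≤ 2 * 10 ^ 6 * (132133 * sievedProd twinNum) := by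
  decide +kernel

theorem C2_le : C2 ≤ 1.320325 := by
  obtain ⟨hpos, hle, -⟩ := sievedProd_certificate
  have hpos' : (0 : ℝ) < sievedProd twinDen := by exact_mod_cast hpos
  have hle' : (2 * 10 ^ 6 * sievedProd twinNum : ℝ) ≤ 1320325 * sievedProd twinDen := by
    exact_mod_cast hle
  refine (C2_le_two_mul_twinProduct (1063 + 2 ^ 17)).trans ?_
  rw [twinProduct_eq_div, ← mul_div_assoc, div_le_iff₀ hpos']
  linarith

theorem le_C2 : 1.320314 ≤ C2 := by
  obtain ⟨hpos, -, hle⟩ := sievedProd_certificate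
  have hpos' : (0 : ℝ) < sievedProd twinDen := by exact_mod_cast hpos
  have hle' : (1320314 * (132134 * sievedProd twinDen) : ℝ) ≤
      2 * 10 ^ 6 * (132133 * sievedProd twinNum) := by exact_mod_cast hle
  have hratio : (((1063 + 2 ^ 17 : ℕ) : ℝ) - 2) / ((1063 + 2 ^ 17 : ℕ) - 1) = 132133 / 132134 := by
    norm_num
  refine le_trans ?_ (two_mul_twinProduct_mul_le_C2 (N := 1063 + 2 ^ 17) (by norm_num))
  rw [hratio, twinProduct_eq_div, div_mul_div_comm, ← mul_div_assoc,
    le_div_iff₀ (mul_pos hpos' (by norm_num))]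
  linarith

/-! ### Counting twin primes -/

/-- `k` is the index of the twin prime pair `(6 * k - 1, 6 * k + 1)`; every twin prime pair except
`(3, 5)` has this form. -/
def IsTwinIndex (k : ℕ) : Prop := (6 * k - 1).Prime ∧ (6 * k + 1).Prime

instance : DecidablePred IsTwinIndex := fun _ ↦ inferInstanceAs (Decidable (_ ∧ _))

theorem mod_six_eq_five_of_twin {p : ℕ} (hp : p.Prime) (hp₂ : (p + 2).Prime) (hp₃ : p ≠ 3) :
    p % 6 = 5 := by
  have two_not_dvd : ¬ 2 ∣ p := fun h ↦ by
    obtain rfl := (Nat.prime_dvd_prime_iff_eq Nat.prime_two hp).1 h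
    norm_num at hp₂
  have three_not_dvd : ¬ 3 ∣ p := fun h ↦
    hp₃ ((Nat.prime_dvd_prime_iff_eq Nat.prime_three hp).1 h).symm
  have three_not_dvd_add : ¬ 3 ∣ p + 2 := fun h ↦ by
    have := (Nat.prime_dvd_prime_iff_eq Nat.prime_three hp₂).1 h
    have := hp.two_le
    lia
  lia

theorem twinPrimes_eq_insert_image {x : ℝ} (hx : 5 ≤ x) :
    {p : ℕ | p.Prime ∧ (p + 2).Prime ∧ (p : ℝ) + 2 ≤ x} =
      ((insert 3 (((Finset.range (⌊(x - 1) / 6⌋₊ + 1)).filter IsTwinIndex).image (6 * · - 1)) :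
        Finset ℕ) : Set ℕ) := by
  have le_floor_iff (k : ℕ) : k ≤ ⌊(x - 1) / 6⌋₊ ↔ (6 * k + 1 : ℝ) ≤ x := by
    rw [Nat.le_floor_iff (by linarith), le_div_iff₀ (by norm_num)]
    constructor <;> intro <;> linarith
  ext p
  simp only [Set.mem_ofPred_eq, Finset.coe_insert, Finset.coe_image, Set.mem_insert_iff,
    Set.mem_image, Finset.mem_coe, Finset.mem_filter, Finset.mem_range, Nat.lt_succ_iff,
    le_floor_iff]
  constructor
  · rintro ⟨hp, hp₂, hpx⟩
    refine or_iff_not_imp_left.2 fun hp₃ ↦ ?_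
    obtain ⟨k, rfl⟩ : ∃ k, p = 6 * (k + 1) - 1 :=
      ⟨p / 6, by have := mod_six_eq_five_of_twin hp hp₂ hp₃; lia⟩
    rw [show 6 * (k + 1) - 1 + 2 = 6 * (k + 1) + 1 by lia] at hp₂
    refine ⟨k + 1, ⟨?_, hp, hp₂⟩, rfl⟩
    rw [show 6 * (k + 1) - 1 = 6 * k + 5 by lia] at hpx
    push_cast at hpx ⊢
    linarith
  · rintro (rfl | ⟨k, ⟨hkx, hk, hk₂⟩, rfl⟩)
    · exact ⟨Nat.prime_three, Nat.prime_five, by push_cast; linarith⟩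
    · have hk₁ : 1 ≤ 6 * k := by have := hk.two_le; lia
      rw [show 6 * k - 1 + 2 = 6 * k + 1 by lia]
      refine ⟨hk, hk₂, ?_⟩
      push_cast [Nat.cast_sub hk₁]
      linarith

theorem piTwin_eq_zero {x : ℝ} (hx : x < 5) : piTwin x = 0 := by
  have hempty : {p : ℕ | p.Prime ∧ (p + 2).Prime ∧ (p : ℝ) + 2 ≤ x} = ∅ := by
    refine Set.eq_empty_of_forall_notMem fun p ⟨hp, hp₂, hpx⟩ ↦ ?_
    have hp₃ : p < 3 := by
      have : (p : ℝ) < 3 := by linarith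
      exact_mod_cast this
    obtain rfl : p = 2 := le_antisymm (by lia) hp.two_le
    norm_num at hp₂
  rw [piTwin, hempty, Nat.card_coe_set_eq, Set.ncard_empty]

theorem piTwin_eq_count {x : ℝ} (hx : 5 ≤ x) :
    piTwin x = 1 + Nat.count IsTwinIndex (⌊(x - 1) / 6⌋₊ + 1) := by
  rw [piTwin, twinPrimes_eq_insert_image hx, Nat.card_coe_set_eq, Set.ncard_coe_finset,
    Finset.card_insert_of_notMem, Finset.card_image_of_injOn, Nat.count_eq_card_filter_range,
    add_comm]
  · intro j hj k _ hjk
    have hj' := (Finset.mem_filter.1 hj).2.1.two_le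
    dsimp only at hjk
    lia
  · simp only [Finset.mem_image, not_exists, not_and]
    intro k _
    lia

theorem isTwinIndex_iff_coprime_factorial {B k : ℕ} (hBk : B < 6 * k - 1)
    (hk : 6 * k + 1 < (B + 1) ^ 2) : IsTwinIndex k ↔ (36 * k ^ 2 - 1).Coprime B ! := by
  have hfactor : 36 * k ^ 2 - 1 = (6 * k - 1) * (6 * k + 1) := by
    rw [mul_comm (6 * k - 1), ← Nat.sq_sub_sq, mul_pow, one_pow]
    rfl
  rw [hfactor, Nat.coprime_mul_iff_left, IsTwinIndex, prime_iff_coprime_factorial hBk (by lia),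
    prime_iff_coprime_factorial (by lia) hk]

/-- The number of `j` in `[k, k + h)` for which `36 * j ^ 2 - 1` is coprime to `F`. -/
def coprimeCount (F k h : ℕ) : ℕ :=
  Nat.rec 0 (fun i c ↦ Nat.add c
    (coprimeIndicator F (Nat.sub (Nat.mul 36 (Nat.pow (Nat.add k i) 2)) 1))) h

theorem count_isTwinIndex_add {B k h : ℕ} (hBk : B < 6 * k - 1)
    (hkh : 6 * (k + h) < (B + 1) ^ 2 + 5) :
    Nat.count IsTwinIndex (k + h) = Nat.count IsTwinIndex k + coprimeCount B ! k h := by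
  induction h with
  | zero => rfl
  | succ h ih =>
    have hstep : coprimeCount B ! k (h + 1) =
        coprimeCount B ! k h + coprimeIndicator B ! (36 * (k + h) ^ 2 - 1) := rfl
    rw [← add_assoc, Nat.count_succ, ih (by lia), hstep, coprimeIndicator_eq, add_assoc]
    simp only [isTwinIndex_iff_coprime_factorial (B := B) (k := k + h) (by lia) (by lia)]

/-! ### The midpoint and trapezoid rules for `Li2` -/

section HermiteHadamard

variable {f : ℝ → ℝ} {a b : ℝ}

theorem intervalIntegrable_reflect (hf : IntervalIntegrable f MeasureTheory.volume a b) :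
    IntervalIntegrable (fun t ↦ f (a + b - t)) MeasureTheory.volume a b := by
  simpa only [add_sub_cancel_left, add_sub_cancel_right] using (hf.comp_sub_left (a + b)).symm

theorem integral_add_reflect (hf : IntervalIntegrable f MeasureTheory.volume a b) :
    ∫ t in a..b, (f t + f (a + b - t)) = 2 * ∫ t in a..b, f t := by
  rw [intervalIntegral.integral_add hf (intervalIntegrable_reflect hf),
    intervalIntegral.integral_comp_sub_left, add_sub_cancel_right, add_sub_cancel_left, two_mul]

theorem midpoint_le_integral_of_convexOn (hab : a ≤ b) (hf : ConvexOn ℝ (Icc a b) f)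
    (hint : IntervalIntegrable f MeasureTheory.volume a b) :
    (b - a) * f ((a + b) / 2) ≤ ∫ t in a..b, f t := by
  have hmid : ∫ _ in a..b, 2 * f ((a + b) / 2) ≤ ∫ t in a..b, (f t + f (a + b - t)) := by
    refine intervalIntegral.integral_mono_on hab intervalIntegrable_const
      (hint.add (intervalIntegrable_reflect hint)) fun t ht ↦ ?_
    have ht' : a + b - t ∈ Icc a b := ⟨by linarith [ht.2], by linarith [ht.1]⟩
    have hconv := hf.2 ht ht' one_half_pos.le one_half_pos.le (add_halves 1)
    rw [← smul_add, add_sub_cancel, smul_eq_mul, smul_eq_mul, smul_eq_mul, one_div_mul_eq_div]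
      at hconv
    linarith
  rw [intervalIntegral.integral_const, integral_add_reflect hint, smul_eq_mul] at hmid
  linarith

theorem add_reflect_le_of_convexOn (hf : ConvexOn ℝ (Icc a b) f) {t : ℝ} (ht : t ∈ Icc a b) :
    f t + f (a + b - t) ≤ f a + f b := by
  have hab : a ≤ b := ht.1.trans ht.2
  obtain ⟨u, v, hu, hv, huv, rfl⟩ := (segment_eq_Icc hab).symm ▸ ht
  have h₁ := hf.2 (left_mem_Icc.2 hab) (right_mem_Icc.2 hab) hu hv huv
  have h₂ := hf.2 (left_mem_Icc.2 hab) (right_mem_Icc.2 hab) hv hu (by rwa [add_comm])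
  have hreflect : a + b - (u • a + v • b) = v • a + u • b := by
    simp only [smul_eq_mul]
    linear_combination (-a - b) * huv
  rw [hreflect]
  simp only [smul_eq_mul] at h₁ h₂ ⊢
  calc f (u * a + v * b) + f (v * a + u * b) ≤ (u + v) * (f a + f b) := by linarith
    _ = f a + f b := by rw [huv, one_mul]

theorem integral_le_trapezoid_of_convexOn (hab : a ≤ b) (hf : ConvexOn ℝ (Icc a b) f)
    (hint : IntervalIntegrable f MeasureTheory.volume a b) :
    ∫ t in a..b, f t ≤ (b - a) * ((f a + f b) / 2) := by
  have hsum : ∫ t in a..b, (f t + f (a + b - t)) ≤ ∫ _ in a..b, (f a + f b) :=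
    intervalIntegral.integral_mono_on hab (hint.add (intervalIntegrable_reflect hint))
      intervalIntegrable_const fun t ht ↦ add_reflect_le_of_convexOn hf ht
  rw [intervalIntegral.integral_const, integral_add_reflect hint, smul_eq_mul] at hsum
  linarith

end HermiteHadamard

theorem convexOn_one_div_log_sq : ConvexOn ℝ (Ioi 1) fun t ↦ 1 / Real.log t ^ 2 := by
  have himage : Real.log '' Ioi 1 = Ioi 0 := by
    ext y
    refine ⟨?_, fun hy ↦ ⟨Real.exp y, Real.one_lt_exp_iff.2 hy, Real.log_exp y⟩⟩
    rintro ⟨t, ht, rfl⟩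
    exact Real.log_pos ht
  have hinv : ConvexOn ℝ (Ioi 0) fun y : ℝ ↦ 1 / y ^ 2 := by
    refine (convexOn_zpow (-2)).congr fun y _ ↦ ?_
    exact (zpow_neg y 2).trans (one_div _).symm
  have hanti : AntitoneOn (fun y : ℝ ↦ 1 / y ^ 2) (Ioi 0) := fun x hx y _ hxy ↦
    one_div_le_one_div_of_le (pow_pos hx 2) (pow_le_pow_left₀ (le_of_lt hx) hxy 2)
  have hlog : ConcaveOn ℝ (Ioi 1) Real.log :=
    strictConcaveOn_log_Ioi.concaveOn.subset (Ioi_subset_Ioi zero_le_one) (convex_Ioi 1)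
  rw [← himage] at hinv hanti
  exact hinv.comp_concaveOn hlog hanti

theorem intervalIntegrable_one_div_log_sq {a b : ℝ} (ha : 1 < a) (hb : 1 < b) :
    IntervalIntegrable (fun t ↦ 1 / Real.log t ^ 2) MeasureTheory.volume a b := by
  have one_lt {t : ℝ} (ht : t ∈ uIcc a b) : 1 < t := (lt_min ha hb).trans_le ht.1
  refine (continuousOn_const.div (ContinuousOn.pow (Real.continuousOn_log.mono fun t ht ↦ ?_) 2)
    fun t ht ↦ pow_ne_zero 2 (Real.log_pos (one_lt ht)).ne').intervalIntegrable
  exact (zero_lt_one.trans (one_lt ht)).ne'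

theorem Li2_add_integral {a b : ℝ} (ha : 1 < a) (hb : 1 < b) :
    Li2 a + ∫ t in a..b, 1 / Real.log t ^ 2 = Li2 b :=
  intervalIntegral.integral_add_adjacent_intervals
    (intervalIntegrable_one_div_log_sq one_lt_two ha) (intervalIntegrable_one_div_log_sq ha hb)

theorem Li2_add_midpoint_le {a b : ℝ} (ha : 1 < a) (hab : a ≤ b) :
    Li2 a + (b - a) / Real.log ((a + b) / 2) ^ 2 ≤ Li2 b := by
  rw [← Li2_add_integral ha (ha.trans_le hab), div_eq_mul_one_div]
  gcongr
  exact midpoint_le_integral_of_convexOn hab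
    (convexOn_one_div_log_sq.subset (fun t ht ↦ ha.trans_le ht.1) (convex_Icc a b))
    (intervalIntegrable_one_div_log_sq ha (ha.trans_le hab))

theorem Li2_le_add_trapezoid {a b : ℝ} (ha : 1 < a) (hab : a ≤ b) :
    Li2 b ≤ Li2 a + (b - a) * ((1 / Real.log a ^ 2 + 1 / Real.log b ^ 2) / 2) := by
  rw [← Li2_add_integral ha (ha.trans_le hab)]
  gcongr
  exact integral_le_trapezoid_of_convexOn hab
    (convexOn_one_div_log_sq.subset (fun t ht ↦ ha.trans_le ht.1) (convex_Icc a b))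
    (intervalIntegrable_one_div_log_sq ha (ha.trans_le hab))

theorem strictMonoOn_Li2 : StrictMonoOn Li2 (Ioi 1) := by
  intro a ha b _ hab
  have hlog : 0 < Real.log ((a + b) / 2) := Real.log_pos (by linarith [mem_Ioi.1 ha])
  refine lt_of_lt_of_le ?_ (Li2_add_midpoint_le ha hab.le)
  exact lt_add_of_pos_right _ (div_pos (sub_pos.2 hab) (pow_pos hlog 2))

/-! ### Fixed point bounds for logarithms and `Li2` -/

theorem log_add_sub_log_eq {a y : ℝ} (ha : 0 < a) (hy : 0 ≤ y) :
    Real.log (a + y) - Real.log a =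
      Real.log ((1 + y / (2 * a + y)) / (1 - y / (2 * a + y))) := by
  have hq : 2 * a + y ≠ 0 := by positivity
  rw [← Real.log_div (by positivity) ha.ne']
  congr 1
  rw [one_add_div hq, one_sub_div hq, div_div_div_cancel_right₀ hq, add_sub_cancel_right,
    add_assoc, ← two_mul, ← mul_add, mul_div_mul_left _ _ two_ne_zero]

theorem le_log_add_sub_log {a y : ℝ} (ha : 0 < a) (hy : 0 ≤ y) :
    2 * y / (2 * a + y) + 2 * y ^ 3 / (3 * (2 * a + y) ^ 3) ≤ Real.log (a + y) - Real.log a := by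
  have hq : 0 < 2 * a + y := by positivity
  have hseries : y / (2 * a + y) + (y / (2 * a + y)) ^ 3 / 3 ≤
      1 / 2 * (Real.log (a + y) - Real.log a) := by
    rw [log_add_sub_log_eq ha hy]
    refine le_trans (le_of_eq ?_) (Real.sum_range_le_log_div (div_nonneg hy hq.le)
      ((div_lt_one hq).2 (by linarith)) 2)
    norm_num [Finset.sum_range_succ]
  calc 2 * y / (2 * a + y) + 2 * y ^ 3 / (3 * (2 * a + y) ^ 3)
      = 2 * (y / (2 * a + y) + (y / (2 * a + y)) ^ 3 / 3) := by field_simp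
    _ ≤ Real.log (a + y) - Real.log a := by linarith

theorem log_add_sub_log_le {a y : ℝ} (ha : 0 < a) (hy : 0 ≤ y) :
    Real.log (a + y) - Real.log a ≤ 2 * y / (2 * a + y) + 2 * y ^ 3 / (3 * (2 * a + y) ^ 3) +
      2 * y ^ 5 / ((2 * a + y) ^ 3 * ((2 * a + y) ^ 2 - y ^ 2)) := by
  have hq : 0 < 2 * a + y := by positivity
  have hyq : y < 2 * a + y := by linarith
  have hseries : 1 / 2 * (Real.log (a + y) - Real.log a) ≤ y / (2 * a + y) +
      (y / (2 * a + y)) ^ 3 / 3 + (y / (2 * a + y)) ^ 5 / (1 - (y / (2 * a + y)) ^ 2) := by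
    rw [log_add_sub_log_eq ha hy]
    refine (Real.log_div_le_sum_range_add (div_nonneg hy hq.le) ((div_lt_one hq).2 hyq) 2).trans_eq
      ?_
    norm_num [Finset.sum_range_succ]
  have hsub : (2 * a + y) ^ 2 - y ^ 2 ≠ 0 := (sub_pos.2 (pow_lt_pow_left₀ hyq hy two_ne_zero)).ne'
  have hremainder : (y / (2 * a + y)) ^ 5 / (1 - (y / (2 * a + y)) ^ 2) =
      y ^ 5 / ((2 * a + y) ^ 3 * ((2 * a + y) ^ 2 - y ^ 2)) := by
    rw [div_pow y _ 2, one_sub_div (by positivity)]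
    field_simp
  rw [hremainder] at hseries
  calc Real.log (a + y) - Real.log a
      ≤ 2 * (y / (2 * a + y) + (y / (2 * a + y)) ^ 3 / 3 +
          y ^ 5 / ((2 * a + y) ^ 3 * ((2 * a + y) ^ 2 - y ^ 2))) := by linarith
    _ = _ := by
        generalize 2 * a + y = q
        ring

theorem div_le_natDiv_add_one (m n : ℕ) : (m : ℝ) / n ≤ (m / n : ℕ) + 1 := by
  rw [← Nat.floor_div_eq_div (K := ℝ)]
  exact (Nat.lt_floor_add_one _).le

/-- The denominator of the fixed point numbers bounding logarithms and `Li2`. -/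
def scale : ℕ := 10 ^ 12

/-- A lower bound for `scale * log ((a + y) / a)`: two terms of the series of `2 * artanh`
at `y / (2 * a + y)`. -/
def logLow (a y : ℕ) : ℕ :=
  let q := 2 * a + y
  2 * y * scale / q + 2 * y ^ 3 * scale / (3 * q ^ 3)

/-- An upper bound for `scale * log ((a + y) / a)`: two terms of the series of `2 * artanh`
at `y / (2 * a + y)` with a bound for the remainder. -/
def logUp (a y : ℕ) : ℕ :=
  let q := 2 * a + y
  2 * y * scale / q + 2 * y ^ 3 * scale / (3 * q ^ 3) +
    2 * y ^ 5 * scale / (q ^ 3 * (q ^ 2 - y ^ 2)) + 3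

theorem scale_pos : (0 : ℝ) < scale := by norm_num [scale]

theorem logLow_div_scale_le {a : ℕ} (ha : 0 < a) (y : ℕ) :
    logLow a y / scale ≤ Real.log (a + y) - Real.log a := by
  have hlow : (logLow a y : ℝ) ≤
      scale * (2 * y / (2 * a + y) + 2 * y ^ 3 / (3 * (2 * a + y) ^ 3)) := by
    have h₁ := Nat.cast_div_le (α := ℝ) (m := 2 * y * scale) (n := 2 * a + y)
    have h₂ := Nat.cast_div_le (α := ℝ) (m := 2 * y ^ 3 * scale) (n := 3 * (2 * a + y) ^ 3)
    rw [logLow]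
    push_cast at h₁ h₂ ⊢
    refine (add_le_add h₁ h₂).trans_eq ?_
    ring
  exact ((div_le_iff₀' scale_pos).2 hlow).trans
    (le_log_add_sub_log (by exact_mod_cast ha) y.cast_nonneg)

theorem le_logUp_div_scale {a : ℕ} (ha : 0 < a) (y : ℕ) :
    Real.log (a + y) - Real.log a ≤ logUp a y / scale := by
  have hyq : y ^ 2 ≤ (2 * a + y) ^ 2 := Nat.pow_le_pow_left (by lia) 2
  have hup : scale * (2 * y / (2 * a + y) + 2 * y ^ 3 / (3 * (2 * a + y) ^ 3) +
      2 * y ^ 5 / ((2 * a + y) ^ 3 * ((2 * a + y) ^ 2 - y ^ 2))) ≤ (logUp a y : ℝ) := by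
    have h₁ := div_le_natDiv_add_one (2 * y * scale) (2 * a + y)
    have h₂ := div_le_natDiv_add_one (2 * y ^ 3 * scale) (3 * (2 * a + y) ^ 3)
    have h₃ := div_le_natDiv_add_one (2 * y ^ 5 * scale)
      ((2 * a + y) ^ 3 * ((2 * a + y) ^ 2 - y ^ 2))
    rw [logUp]
    push_cast [Nat.cast_sub hyq] at h₁ h₂ h₃ ⊢
    refine le_trans (le_of_eq ?_) ((add_le_add (add_le_add h₁ h₂) h₃).trans_eq ?_) <;> ring
  exact (log_add_sub_log_le (by exact_mod_cast ha) y.cast_nonneg).trans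
    ((le_div_iff₀' scale_pos).2 hup)

theorem log_div_le_of_log_div_le {a y l : ℕ} (ha : 0 < a) {c : ℝ} (hc : c ≠ 0)
    (hl : Real.log (a / c) ≤ l / scale) :
    Real.log ((a + y : ℕ) / c) ≤ (l + logUp a y : ℕ) / scale := by
  have hincr := le_logUp_div_scale ha y
  have ha' : (a : ℝ) ≠ 0 := by exact_mod_cast ha.ne'
  have hay : ((a + y : ℕ) : ℝ) ≠ 0 := by exact_mod_cast (ha.trans_le le_self_add).ne'
  rw [Real.log_div ha' hc] at hl
  rw [Real.log_div hay hc]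
  push_cast
  rw [add_div]
  linarith

theorem le_log_div_of_le_log_div {a y l : ℕ} (ha : 0 < a) {c : ℝ} (hc : c ≠ 0)
    (hl : l / scale ≤ Real.log (a / c)) :
    (l + logLow a y : ℕ) / scale ≤ Real.log ((a + y : ℕ) / c) := by
  have hincr := logLow_div_scale_le ha y
  have ha' : (a : ℝ) ≠ 0 := by exact_mod_cast ha.ne'
  have hay : ((a + y : ℕ) : ℝ) ≠ 0 := by exact_mod_cast (ha.trans_le le_self_add).ne'
  rw [Real.log_div ha' hc] at hl
  rw [Real.log_div hay hc]
  push_cast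
  rw [add_div]
  linarith

theorem natDiv_div_scale_le (n d m : ℕ) :
    ((n * scale ^ 3 / (d * m ^ 2) : ℕ) : ℝ) / scale ≤ n / d / (m / scale) ^ 2 := by
  have hscale := scale_pos.ne'
  have h := Nat.cast_div_le (α := ℝ) (m := n * scale ^ 3) (n := d * m ^ 2)
  rw [div_le_iff₀ scale_pos]
  refine h.trans_eq ?_
  push_cast
  field_simp

theorem le_natDiv_div_scale (n d m : ℕ) :
    (n : ℝ) / d / (m / scale) ^ 2 ≤ (n * scale ^ 3 / (d * m ^ 2) + 1 : ℕ) / scale := by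
  have hscale := scale_pos.ne'
  rw [le_div_iff₀ scale_pos]
  push_cast
  refine le_trans (le_of_eq ?_) (div_le_natDiv_add_one (n * scale ^ 3) (d * m ^ 2))
  push_cast
  field_simp

/-- A grid point `pos / 8` with fixed point bounds `log / scale` and `area / scale` for the values
of the logarithm and of `Li2` there. -/
structure LiNode where
  pos : ℕ
  log : ℕ
  area : ℕ

namespace LiNode

/-- The grid point of a node. -/
noncomputable def point (s : LiNode) : ℝ := s.pos / 8

/-- The node has an upper bound for the logarithm and a lower bound for `Li2`. -/
structure IsLower (s : LiNode) : Prop where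
  le_pos : 16 ≤ s.pos
  log_le : Real.log s.point ≤ s.log / scale
  area_le : s.area / scale ≤ Li2 s.point

/-- The node has a lower bound for the logarithm and an upper bound for `Li2`. -/
structure IsUpper (s : LiNode) : Prop where
  le_pos : 16 ≤ s.pos
  log_pos : 0 < s.log
  le_log : s.log / scale ≤ Real.log s.point
  le_area : Li2 s.point ≤ s.area / scale

/-- The lower node at distance `2 * y` by the midpoint rule. -/
def midpointStep (y : ℕ) (s : LiNode) : LiNode :=
  let m := s.log + logUp s.pos y
  ⟨s.pos + 2 * y, m + logUp (s.pos + y) y, s.area + 2 * y * scale ^ 3 / (8 * m ^ 2)⟩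

/-- The upper node at distance `y` by the trapezoid rule. -/
def trapezoidStep (y : ℕ) (s : LiNode) : LiNode :=
  let l := s.log + logLow s.pos y
  ⟨s.pos + y, l, s.area + (y * scale ^ 3 / (16 * s.log ^ 2) + 1) +
    (y * scale ^ 3 / (16 * l ^ 2) + 1)⟩

theorem one_lt_point {s : LiNode} (hs : 16 ≤ s.pos) : 1 < s.point := by
  have : (16 : ℝ) ≤ s.pos := by exact_mod_cast hs
  rw [point]
  linarith

theorem IsLower.midpointStep {s : LiNode} (hs : s.IsLower) (y : ℕ) :
    (s.midpointStep y).IsLower := by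
  have hpos : 0 < s.pos := by linarith [hs.le_pos]
  have hlog_mid : Real.log ((s.pos + y : ℕ) / 8) ≤ (s.log + logUp s.pos y : ℕ) / scale :=
    log_div_le_of_log_div_le hpos (by norm_num) hs.log_le
  have hpoint : (s.midpointStep y).point = s.point + (2 * y : ℕ) / 8 := by
    simp only [point, LiNode.midpointStep]
    push_cast
    ring
  refine ⟨hs.le_pos.trans le_self_add, ?_, ?_⟩
  · rw [point, show (s.midpointStep y).pos = s.pos + y + y by simp only [LiNode.midpointStep]; ring]
    exact log_div_le_of_log_div_le (by lia) (by norm_num) hlog_mid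
  · have hstep := Li2_add_midpoint_le (one_lt_point hs.le_pos)
      (hpoint ▸ le_add_of_nonneg_right (by positivity))
    have hmid : (s.point + (s.midpointStep y).point) / 2 = (s.pos + y : ℕ) / 8 := by
      rw [hpoint, point]
      push_cast
      ring
    have hlog_pos : 0 < Real.log ((s.pos + y : ℕ) / 8) :=
      Real.log_pos (one_lt_point (s := ⟨s.pos + y, 0, 0⟩) (hs.le_pos.trans le_self_add))
    rw [hmid, hpoint, add_sub_cancel_left] at hstep
    calc ((s.midpointStep y).area : ℝ) / scale
        ≤ s.area / scale + (2 * y : ℕ) / (8 : ℕ) / ((s.log + logUp s.pos y : ℕ) / scale) ^ 2 := by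
          rw [LiNode.midpointStep, Nat.cast_add, add_div]
          exact add_le_add le_rfl (natDiv_div_scale_le _ _ _)
      _ ≤ Li2 s.point + (2 * y : ℕ) / 8 / Real.log ((s.pos + y : ℕ) / 8) ^ 2 := by
          gcongr
          exacts [hs.area_le, le_rfl]
      _ ≤ Li2 (s.midpointStep y).point := hpoint ▸ hstep

theorem IsUpper.trapezoidStep {s : LiNode} (hs : s.IsUpper) (y : ℕ) :
    (s.trapezoidStep y).IsUpper := by
  have hpos : 0 < s.pos := by linarith [hs.le_pos]
  have hlog_pos : 0 < s.log + logLow s.pos y := Nat.add_pos_left hs.log_pos _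
  have hpoint : (s.trapezoidStep y).point = s.point + y / 8 := by
    simp only [point, LiNode.trapezoidStep]
    push_cast
    ring
  have hlog : ((s.log + logLow s.pos y : ℕ) : ℝ) / scale ≤ Real.log (s.trapezoidStep y).point :=
    le_log_div_of_le_log_div hpos (by norm_num) hs.le_log
  refine ⟨hs.le_pos.trans le_self_add, hlog_pos, hlog, ?_⟩
  have hscaled_pos {l : ℕ} (hl : 0 < l) : (0 : ℝ) < l / scale :=
    div_pos (by exact_mod_cast hl) scale_pos
  calc Li2 (s.trapezoidStep y).point
      ≤ Li2 s.point + y / 8 * ((1 / Real.log s.point ^ 2 +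
          1 / Real.log (s.trapezoidStep y).point ^ 2) / 2) := by
        have hstep := Li2_le_add_trapezoid (one_lt_point hs.le_pos)
          (b := (s.trapezoidStep y).point) (hpoint ▸ le_add_of_nonneg_right (by positivity))
        rwa [hpoint, add_sub_cancel_left, ← hpoint] at hstep
    _ ≤ s.area / scale + y / 8 * ((1 / (s.log / scale) ^ 2 +
          1 / ((s.log + logLow s.pos y : ℕ) / scale) ^ 2) / 2) := by
        gcongr
        exacts [hs.le_area, pow_pos (hscaled_pos hs.log_pos) 2, hs.le_log,
          pow_pos (hscaled_pos hlog_pos) 2]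
    _ = s.area / scale + y / (16 : ℕ) / (s.log / scale) ^ 2 +
          y / (16 : ℕ) / ((s.log + logLow s.pos y : ℕ) / scale) ^ 2 := by
        push_cast
        ring
    _ ≤ (s.trapezoidStep y).area / scale := by
        refine (add_le_add (add_le_add le_rfl (le_natDiv_div_scale y 16 _))
          (le_natDiv_div_scale y 16 _)).trans_eq ?_
        rw [LiNode.trapezoidStep, ← add_div, ← add_div]
        norm_cast

end LiNode

/-! ### The verification -/

theorem piTwin_le_one_add_count {x : ℝ} {k : ℕ} (hx : x < 6 * k + 1) :
    piTwin x ≤ 1 + Nat.count IsTwinIndex k := by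
  rcases lt_or_ge x 5 with hx₅ | hx₅
  · rw [piTwin_eq_zero hx₅]
    exact Nat.zero_le _
  · have hfloor : ⌊(x - 1) / 6⌋₊ < k :=
      (Nat.floor_lt (div_nonneg (by linarith) (by norm_num))).2 (by linarith)
    rw [piTwin_eq_count hx₅]
    gcongr
    exact hfloor

theorem Li2_pos {x : ℝ} (hx : 2 < x) : 0 < Li2 x := by
  have h := strictMonoOn_Li2 (mem_Ioi.2 one_lt_two) (mem_Ioi.2 (one_lt_two.trans hx)) hx
  rwa [Li2, intervalIntegral.integral_same] at h

theorem C2_pos : 0 < C2 := lt_of_lt_of_le (by norm_num) le_C2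

theorem piTwin_lt_of_isLower {s : LiNode} (hs : s.IsLower) {k : ℕ}
    (hk : (1 + Nat.count IsTwinIndex k) * (10 ^ 6 * scale) < 1320314 * s.area) {x : ℝ}
    (hsx : s.point ≤ x) (hxk : x < 6 * k + 1) : piTwin x < C2 * Li2 x := by
  have hs₁ := LiNode.one_lt_point hs.le_pos
  have hle : (piTwin x : ℝ) ≤ 1 + Nat.count IsTwinIndex k := by
    exact_mod_cast piTwin_le_one_add_count hxk
  have hk' : (1 + Nat.count IsTwinIndex k : ℝ) * (10 ^ 6 * scale) < 1320314 * s.area := by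
    exact_mod_cast hk
  calc (piTwin x : ℝ) ≤ 1 + Nat.count IsTwinIndex k := hle
    _ < 1.320314 * (s.area / scale) := by
        rw [← mul_div_assoc, lt_div_iff₀ scale_pos]
        linarith
    _ ≤ C2 * Li2 x :=
        mul_le_mul le_C2 (hs.area_le.trans (strictMonoOn_Li2.monotoneOn hs₁ (hs₁.trans_le hsx) hsx))
          (by positivity) C2_pos.le

/-- The state of the verification of `piTwin x < C2 * Li2 x` when it has reached
`x = 6 * idx + 1`: the number `count` of twin indices below `idx`, and a node at that point. -/
structure ScanState where
  idx : ℕ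
  count : ℕ
  node : LiNode

namespace ScanState

/-- A correct state of the verification, up to the first sign change. -/
structure IsValid (s : ScanState) : Prop where
  idx_pos : 0 < s.idx
  idx_le : s.idx ≤ 228232
  count_eq : s.count = Nat.count IsTwinIndex s.idx
  node_pos : s.node.pos = 8 * (6 * s.idx + 1)
  node_isLower : s.node.IsLower
  piTwin_lt : ∀ x : ℝ, 2 < x → x < 6 * s.idx + 1 → piTwin x < C2 * Li2 x

/-- The bound for the prime factors that are sieved out in the step from index `k`: it
must be below `6 * k - 1`, and `1171 ^ 2` exceeds all numbers to be tested. -/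
def sieveBound (k : ℕ) : ℕ := min (4 * k) 1170

/-- How far the index moves in one step: about as far as `C2 * Li2 x` stays above the new value of
`piTwin x`. The excess of the former is multiplied by `4` because few of the indices are twin
indices; nothing but efficiency depends on this. -/
def stride (s : ScanState) : ℕ :=
  let excess := 1320314 * s.node.area / (10 ^ 6 * scale) - 1 - s.count
  min (max 1 (min (4 * excess) (s.idx / 8))) (228232 - s.idx)

/-- The number of twin indices below `s.idx + s.stride`. -/
def nextCount (s : ScanState) : ℕ :=
  s.count + coprimeCount (sieveBound s.idx)! s.idx s.stride

/-- Advance by the stride, provided that the value of `C2 * Li2` at the old node exceeds all values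
of `piTwin` in between. -/
def step (s : ScanState) : ScanState :=
  if (1 + s.nextCount) * (10 ^ 6 * scale) < 1320314 * s.node.area then
    ⟨s.idx + s.stride, s.nextCount, (LiNode.midpointStep (6 * s.stride))^[4] s.node⟩
  else s

theorem IsValid.nextCount_eq {s : ScanState} (hs : s.IsValid) :
    s.nextCount = Nat.count IsTwinIndex (s.idx + s.stride) := by
  have hidx := hs.idx_pos
  have hstride : s.stride ≤ s.idx ∧ s.idx + s.stride ≤ 228232 := by
    have := hs.idx_le
    rw [stride]
    lia
  have hsq : 6 * (s.idx + s.stride) < (sieveBound s.idx + 1) ^ 2 + 5 := by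
    rcases le_total (4 * s.idx) 1170 with h | h
    · rw [sieveBound, min_eq_left h]
      nlinarith
    · rw [sieveBound, min_eq_right h]
      lia
  rw [nextCount, hs.count_eq, count_isTwinIndex_add (by rw [sieveBound]; lia) hsq]

theorem IsValid.step {s : ScanState} (hs : s.IsValid) : s.step.IsValid := by
  rw [ScanState.step]
  split_ifs with hlt
  · have hnode_pos (y : ℕ) : ((LiNode.midpointStep y)^[4] s.node).pos = s.node.pos + 8 * y := by
      simp only [Function.iterate_succ, Function.iterate_zero, Function.comp_apply, id,
        LiNode.midpointStep]
      ring
    refine ⟨hs.idx_pos.trans_le le_self_add, ?_, hs.nextCount_eq, ?_, ?_, fun x hx₂ hx ↦ ?_⟩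
    · have := hs.idx_le
      dsimp only
      rw [stride]
      lia
    · dsimp only
      rw [hnode_pos, hs.node_pos]
      ring
    · exact Function.Iterate.rec LiNode.IsLower hs.node_isLower (fun _ h ↦ h.midpointStep _) 4
    · rcases lt_or_ge x (6 * s.idx + 1) with hx' | hx'
      · exact hs.piTwin_lt x hx₂ hx'
      · rw [hs.nextCount_eq] at hlt
        refine piTwin_lt_of_isLower hs.node_isLower hlt ?_ hx
        rw [LiNode.point, hs.node_pos]
        push_cast
        linarith
  · exact hs

/-- Iterate `step` at most `n` times, up to the first sign change. Comparing the index in every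
round makes the kernel evaluate the states one by one, instead of `n` nested calls of `step`. -/
def run (n : ℕ) (s : ScanState) : ScanState :=
  Nat.rec id (fun _ ih s ↦ if s.idx = 228232 then s else ih s.step) n s

theorem IsValid.run {s : ScanState} (hs : s.IsValid) (n : ℕ) : (s.run n).IsValid := by
  induction n generalizing s with
  | zero => exact hs
  | succ n ih =>
    change (if s.idx = 228232 then s else s.step.run n).IsValid
    split_ifs
    · exact hs
    · exact ih hs.step

end ScanState

theorem isLower_two : (⟨16, 693147180800, 0⟩ : LiNode).IsLower := by
  have hpoint : (⟨16, 693147180800, 0⟩ : LiNode).point = 2 := by norm_num [LiNode.point]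
  refine ⟨le_rfl, ?_, ?_⟩
  · rw [hpoint]
    refine Real.log_two_lt_d9.le.trans ?_
    norm_num [scale]
  · rw [hpoint, Li2, intervalIntegral.integral_same]
    norm_num

theorem isUpper_two : (⟨16, 693147180300, 0⟩ : LiNode).IsUpper := by
  have hpoint : (⟨16, 693147180300, 0⟩ : LiNode).point = 2 := by norm_num [LiNode.point]
  refine ⟨le_rfl, by norm_num, ?_, ?_⟩
  · rw [hpoint]
    refine le_trans ?_ Real.log_two_gt_d9.le
    norm_num [scale]
  · rw [hpoint, Li2, intervalIntegral.integral_same]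
    norm_num

/-- The lower node at `5`, the first value of `x` with `piTwin x ≠ 0`. -/
def lowerNodeFive : LiNode := (LiNode.midpointStep 1)^[12] ⟨16, 693147180800, 0⟩

theorem isLower_lowerNodeFive : lowerNodeFive.IsLower :=
  Function.Iterate.rec LiNode.IsLower isLower_two (fun _ h ↦ h.midpointStep 1) 12

/-- The state of the verification at `7 = 6 * 1 + 1`. -/
def initialState : ScanState := ⟨1, 0, (LiNode.midpointStep 1)^[8] lowerNodeFive⟩

theorem isValid_initialState : initialState.IsValid := by
  refine ⟨one_pos, by decide, by decide, by decide +kernel,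
    Function.Iterate.rec LiNode.IsLower isLower_lowerNodeFive (fun _ h ↦ h.midpointStep 1) 8,
    fun x hx₂ hx ↦ ?_⟩
  rcases lt_or_ge x 5 with hx₅ | hx₅
  · rw [piTwin_eq_zero hx₅, Nat.cast_zero]
    exact mul_pos C2_pos (Li2_pos hx₂)
  · have hpoint : lowerNodeFive.point = 5 := by
      rw [LiNode.point, show lowerNodeFive.pos = 40 by decide +kernel]
      norm_num
    exact piTwin_lt_of_isLower isLower_lowerNodeFive (by decide +kernel) (hpoint ▸ hx₅) hx

/-- The state of the verification at the first sign change. -/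
def finalState : ScanState := initialState.run 2100

theorem isValid_finalState : finalState.IsValid :=
  isValid_initialState.run _

theorem finalState_idx_count : finalState.idx = 228232 ∧ finalState.count = 10742 := by
  decide +kernel

/-- The trapezoid step from `s.pos` with a grid that becomes coarser away from `0` and has
`8 * 1369393` as its last point. -/
def upperStep (s : LiNode) : LiNode :=
  s.trapezoidStep (min (max 1 (s.pos / 32)) (8 * 1369393 - s.pos))

theorem C2_mul_Li2_lt : C2 * Li2 1369393 < 10744 := by
  set s := upperStep^[500] ⟨16, 693147180300, 0⟩ with hs
  have hupper : s.IsUpper :=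
    Function.Iterate.rec LiNode.IsUpper isUpper_two (fun _ h ↦ h.trapezoidStep _) _
  have hcert : s.pos = 8 * 1369393 ∧ 1320325 * s.area < 10744 * (10 ^ 6 * scale) := by
    rw [hs]
    decide +kernel
  have hpoint : s.point = 1369393 := by
    rw [LiNode.point, hcert.1]
    norm_num
  have harea : (1320325 * s.area : ℝ) < 10744 * (10 ^ 6 * scale) := by exact_mod_cast hcert.2
  calc C2 * Li2 1369393 ≤ 1.320325 * (s.area / scale) :=
        mul_le_mul C2_le (hpoint ▸ hupper.le_area) (Li2_pos (by norm_num)).le (by norm_num)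
    _ < 10744 := by
        rw [← mul_div_assoc, div_lt_iff₀ scale_pos]
        linarith

theorem piTwin_1369393 : piTwin 1369393 = 10744 := by
  have hidx : ⌊((1369393 : ℝ) - 1) / 6⌋₊ = 228232 := by norm_num
  have hcount := isValid_finalState.count_eq
  have htwin : IsTwinIndex 228232 := by norm_num [IsTwinIndex]
  rw [finalState_idx_count.1, finalState_idx_count.2] at hcount
  rw [piTwin_eq_count (by norm_num), hidx, Nat.count_succ, ← hcount, if_pos htwin]

/-- The first sign change of `d₂(x) = π₂(x) − C₂·Li₂(x)` occurs at the twin prime pair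
`(1369391, 1369393)`: both numbers are prime, `π₂(x) < C₂·Li₂(x)` for all real
`2 < x < 1369393`, and `π₂(1369393) > C₂·Li₂(1369393)`. -/
theorem first_sign_change_of_d2 :
    Nat.Prime 1369391 ∧ Nat.Prime 1369393 ∧
    (∀ x : ℝ, 2 < x → x < 1369393 → (piTwin x : ℝ) < C2 * Li2 x) ∧
    (piTwin 1369393 : ℝ) > C2 * Li2 1369393 := by
  refine ⟨by norm_num, by norm_num, fun x hx₂ hx ↦ ?_, ?_⟩
  · refine isValid_finalState.piTwin_lt x hx₂ (hx.trans_eq ?_)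
    rw [finalState_idx_count.1]
    norm_num
  · rw [piTwin_1369393]
    exact_mod_cast C2_mul_Li2_lt
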